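/- Let w(λ,x) be a nonnegative weight function that is totally positive of order 2, and let f : [0,∞) → [0,∞) be a non-decreasing Borel-measurable function satisfying the uniform Lipschitz condition |f(x₁) − f(x₂)| ≤ |x₁ − x₂| for all x₁, x₂ ≥ 0. Let X be a nonnegative random variable with probability density g such that, for λ ∈ {λ₁, λ₂}, 0 < E[w(λ,X)] < ∞, E[w(λ,X)f(X)] < ∞ and E[w(λ,X)X] < ∞. Then for all λ₁ > λ₂ > 0: H[λ₁,f(X)] − H[λ₂,f(X)] ≤ H[λ₁,X] − H[λ₂,X]. -/

import Mathlib

open MeasureTheory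

/-!
Since `f` is 1-Lipschitz, `k x = x - f x` is non-decreasing, and by linearity of the premium the
claim is `H[l2, k(X)] ≤ H[l1, k(X)]`. Total positivity says that the ratio of the weighted densities
`a = w l1 * g` and `b = w l2 * g` is non-decreasing, so that
`(a x * b y - a y * b x) * (k x - k y)` is nonnegative for all `x` and `y`. Integrating this in both
variables gives Chebyshev's inequality `(∫ b k) (∫ a) ≤ (∫ a k) (∫ b)`, which is the comparison of
premiums with denominators cleared.
-/

section LikelihoodRatio

variable {α : Type*} [LinearOrder α] {s : Set α} {a b : α → ℝ}

/-- The likelihood ratio order on `s`: the ratio `a / b` is non-decreasing on `s`. Denominators are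
cleared, so that zeros of `b` are allowed. A function `w` on `ℝ × ℝ` is totally positive of order 2
if and only if `LikelihoodRatioLE Set.univ (w l2) (w l1)` holds whenever `l2 < l1`. -/
def LikelihoodRatioLE (s : Set α) (b a : α → ℝ) : Prop :=
  ∀ ⦃x⦄, x ∈ s → ∀ ⦃y⦄, y ∈ s → x < y → a x * b y ≤ a y * b x

namespace LikelihoodRatioLE

theorem mul_right (hba : LikelihoodRatioLE s b a) {g : α → ℝ} (hg : ∀ x ∈ s, 0 ≤ g x) :
    LikelihoodRatioLE s (fun x => b x * g x) (fun x => a x * g x) := by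
  intro x hx y hy hxy
  calc a x * g x * (b y * g y) = a x * b y * (g x * g y) := by ring
    _ ≤ a y * b x * (g x * g y) :=
      mul_le_mul_of_nonneg_right (hba hx hy hxy) (mul_nonneg (hg x hx) (hg y hy))
    _ = a y * g y * (b x * g x) := by ring

theorem mul_sub_nonneg_of_monotoneOn (hba : LikelihoodRatioLE s b a) {k : α → ℝ}
    (hk : MonotoneOn k s) {x y : α} (hx : x ∈ s) (hy : y ∈ s) :
    0 ≤ (a x * b y - a y * b x) * (k x - k y) := by
  rcases lt_trichotomy x y with hxy | rfl | hyx
  · exact mul_nonneg_of_nonpos_of_nonpos (sub_nonpos.2 (hba hx hy hxy))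
      (sub_nonpos.2 (hk hx hy hxy.le))
  · simp
  · exact mul_nonneg (sub_nonneg.2 (hba hy hx hyx)) (sub_nonneg.2 (hk hy hx hyx.le))

end LikelihoodRatioLE

end LikelihoodRatio

section Chebyshev

variable {α : Type*} [MeasurableSpace α] {μ : Measure α} {a b k : α → ℝ}

theorem integral_integral_mul_sub_mul_sub (ha : Integrable a μ) (hb : Integrable b μ)
    (hak : Integrable (fun x => a x * k x) μ) (hbk : Integrable (fun x => b x * k x) μ) :
    ∫ y, ∫ x, (a x * b y - a y * b x) * (k x - k y) ∂μ ∂μ =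
      2 * ((∫ x, a x * k x ∂μ) * (∫ x, b x ∂μ) - (∫ x, b x * k x ∂μ) * (∫ x, a x ∂μ)) := by
  have inner_integral (y : α) : ∫ x, (a x * b y - a y * b x) * (k x - k y) ∂μ =
      ((∫ x, a x * k x ∂μ) * b y - (∫ x, a x ∂μ) * (b y * k y)) -
        ((∫ x, b x * k x ∂μ) * a y - (∫ x, b x ∂μ) * (a y * k y)) := by
    calc ∫ x, (a x * b y - a y * b x) * (k x - k y) ∂μ
        = ∫ x, (a x * k x * b y - a x * (b y * k y)) -
            (b x * k x * a y - b x * (a y * k y)) ∂μ := by congr with x; ring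
      _ = _ := by
        rw [integral_sub ((hak.mul_const _).sub' (ha.mul_const _))
            ((hbk.mul_const _).sub' (hb.mul_const _)),
          integral_sub (hak.mul_const _) (ha.mul_const _),
          integral_sub (hbk.mul_const _) (hb.mul_const _)]
        simp only [integral_mul_const]
  simp only [inner_integral]
  rw [integral_sub ((hb.const_mul _).sub' (hbk.const_mul _))
      ((ha.const_mul _).sub' (hak.const_mul _)),
    integral_sub (hb.const_mul _) (hbk.const_mul _),
    integral_sub (ha.const_mul _) (hak.const_mul _)]
  simp only [integral_const_mul]
  ring

theorem LikelihoodRatioLE.integral_mul_mul_integral_le [LinearOrder α] {s : Set α}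
    (hba : LikelihoodRatioLE s b a) (hs : ∀ᵐ x ∂μ, x ∈ s) (hk : MonotoneOn k s)
    (ha : Integrable a μ) (hb : Integrable b μ)
    (hak : Integrable (fun x => a x * k x) μ) (hbk : Integrable (fun x => b x * k x) μ) :
    (∫ x, b x * k x ∂μ) * (∫ x, a x ∂μ) ≤ (∫ x, a x * k x ∂μ) * (∫ x, b x ∂μ) := by
  have h_nonneg : 0 ≤ ∫ y, ∫ x, (a x * b y - a y * b x) * (k x - k y) ∂μ ∂μ := by
    refine integral_nonneg_of_ae ?_
    filter_upwards [hs] with y hy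
    refine integral_nonneg_of_ae ?_
    filter_upwards [hs] with x hx
    exact hba.mul_sub_nonneg_of_monotoneOn hk hx hy
  rw [integral_integral_mul_sub_mul_sub ha hb hak hbk] at h_nonneg
  linarith

end Chebyshev

section WeightedPremium

variable {α : Type*} [MeasurableSpace α] {μ : Measure α} {g u v w f h k : α → ℝ}

/-- The weighted premium `H[l, h(X)] = E[w(l, X) h(X)] / E[w(l, X)]` of a random variable `X` with
density `g` with respect to `μ`, for a fixed parameter `l`: here `w` is the section `w(l, ·)`. -/
noncomputable def weightedPremium (μ : Measure α) (g w h : α → ℝ) : ℝ :=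
  (∫ x, w x * h x * g x ∂μ) / ∫ x, w x * g x ∂μ

theorem weightedPremium_sub (hf : Integrable (fun x => w x * f x * g x) μ)
    (hh : Integrable (fun x => w x * h x * g x) μ) :
    weightedPremium μ g w (fun x => h x - f x) =
      weightedPremium μ g w h - weightedPremium μ g w f := by
  simp only [weightedPremium, mul_sub, sub_mul, integral_sub hh hf, sub_div]

theorem LikelihoodRatioLE.weightedPremium_le [LinearOrder α] {s : Set α}
    (hvu : LikelihoodRatioLE s v u) (hg : ∀ x ∈ s, 0 ≤ g x) (hs : ∀ᵐ x ∂μ, x ∈ s)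
    (hk : MonotoneOn k s)
    (hu : Integrable (fun x => u x * g x) μ) (huk : Integrable (fun x => u x * k x * g x) μ)
    (hv : Integrable (fun x => v x * g x) μ) (hvk : Integrable (fun x => v x * k x * g x) μ)
    (hu_pos : 0 < ∫ x, u x * g x ∂μ) (hv_pos : 0 < ∫ x, v x * g x ∂μ) :
    weightedPremium μ g v k ≤ weightedPremium μ g u k := by
  simp only [mul_right_comm _ (k _)] at huk hvk
  rw [weightedPremium, weightedPremium, div_le_div_iff₀ hv_pos hu_pos]
  simp only [mul_right_comm _ (k _)]
  exact (hvu.mul_right hg).integral_mul_mul_integral_le hs hk hu hv huk hvk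

theorem stmt_2_general [LinearOrder α] {s : Set α}
    (hvu : LikelihoodRatioLE s v u) (hg : ∀ x ∈ s, 0 ≤ g x) (hs : ∀ᵐ x ∂μ, x ∈ s)
    (hfh : MonotoneOn (fun x => h x - f x) s)
    (hu : Integrable (fun x => u x * g x) μ) (huf : Integrable (fun x => u x * f x * g x) μ)
    (huh : Integrable (fun x => u x * h x * g x) μ) (hu_pos : 0 < ∫ x, u x * g x ∂μ)
    (hv : Integrable (fun x => v x * g x) μ) (hvf : Integrable (fun x => v x * f x * g x) μ)
    (hvh : Integrable (fun x => v x * h x * g x) μ) (hv_pos : 0 < ∫ x, v x * g x ∂μ) :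
    weightedPremium μ g u f - weightedPremium μ g v f ≤
      weightedPremium μ g u h - weightedPremium μ g v h := by
  have premium_sub_le : weightedPremium μ g v (fun x => h x - f x) ≤
      weightedPremium μ g u (fun x => h x - f x) :=
    hvu.weightedPremium_le hg hs hfh hu (by simpa only [mul_sub, sub_mul] using huh.sub' huf)
      hv (by simpa only [mul_sub, sub_mul] using hvh.sub' hvf) hu_pos hv_pos
  rw [weightedPremium_sub hvf hvh, weightedPremium_sub huf huh] at premium_sub_le
  linarith

end WeightedPremium

theorem monotoneOn_id_sub_of_lipschitzOnWith_one {f : ℝ → ℝ} {s : Set ℝ}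
    (hf : LipschitzOnWith 1 f s) : MonotoneOn (fun x => x - f x) s := by
  intro x hx y hy hxy
  have f_le : f y ≤ f x + (y - x) := by
    simpa [Real.dist_eq, abs_of_nonneg (sub_nonneg.2 hxy)] using hf.le_add_mul hy hx
  linarith

/-- **Lipschitz bound.** If `w` is TP₂, `f : [0,∞) → [0,∞)` is non-decreasing,
Borel measurable, and 1-Lipschitz, and the relevant expectations are finite with positive
denominators, then for `λ₁ > λ₂ > 0`,
`H[λ₁,f(X)] − H[λ₂,f(X)] ≤ H[λ₁,X] − H[λ₂,X]`. -/
theorem stmt_2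
    (w : ℝ → ℝ → ℝ) (hw_nonneg : ∀ l x : ℝ, 0 ≤ w l x)
    (hTP2 : ∀ l1 l2 x1 x2 : ℝ, l2 < l1 → x2 < x1 →
      0 ≤ w l1 x1 * w l2 x2 - w l1 x2 * w l2 x1)
    (f : ℝ → ℝ) (hf_nonneg : ∀ x : ℝ, 0 ≤ x → 0 ≤ f x)
    (hf_mono : ∀ x y : ℝ, 0 ≤ x → x ≤ y → f x ≤ f y)
    (hf_meas : Measurable f)
    (hf_lip : ∀ x1 x2 : ℝ, 0 ≤ x1 → 0 ≤ x2 → |f x1 - f x2| ≤ |x1 - x2|)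
    (g : ℝ → ℝ) (hg_nonneg : ∀ x : ℝ, 0 ≤ g x) (hg_meas : Measurable g)
    (hg_prob : ∫ x in Set.Ici (0:ℝ), g x = 1)
    (l1 l2 : ℝ) (hl2 : 0 < l2) (hl : l2 < l1)
    (hInt : ∀ l : ℝ, l = l1 ∨ l = l2 →
      IntegrableOn (fun x => w l x * g x) (Set.Ici 0) ∧
      IntegrableOn (fun x => w l x * f x * g x) (Set.Ici 0) ∧
      IntegrableOn (fun x => w l x * x * g x) (Set.Ici 0) ∧
      0 < ∫ x in Set.Ici (0:ℝ), w l x * g x) :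
    (∫ x in Set.Ici (0:ℝ), w l1 x * f x * g x) / (∫ x in Set.Ici (0:ℝ), w l1 x * g x) -
      (∫ x in Set.Ici (0:ℝ), w l2 x * f x * g x) / (∫ x in Set.Ici (0:ℝ), w l2 x * g x) ≤
    (∫ x in Set.Ici (0:ℝ), w l1 x * x * g x) / (∫ x in Set.Ici (0:ℝ), w l1 x * g x) -
      (∫ x in Set.Ici (0:ℝ), w l2 x * x * g x) / (∫ x in Set.Ici (0:ℝ), w l2 x * g x) := by
  obtain ⟨hu, huf, hux, hu_pos⟩ := hInt l1 (.inl rfl)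
  obtain ⟨hv, hvf, hvx, hv_pos⟩ := hInt l2 (.inr rfl)
  have hvu : LikelihoodRatioLE (Set.Ici 0) (w l2) (w l1) :=
    fun x _ y _ hxy => sub_nonneg.1 (hTP2 l1 l2 y x hl hxy)
  have hf_lipschitz : LipschitzOnWith 1 f (Set.Ici 0) :=
    .of_dist_le_mul fun x hx y hy => by simpa [Real.dist_eq] using hf_lip x y hx hy
  exact stmt_2_general hvu (fun x _ => hg_nonneg x) (ae_restrict_mem measurableSet_Ici)
    (monotoneOn_id_sub_of_lipschitzOnWith_one hf_lipschitz) hu huf hux hu_pos hv hvf hvx hv_pos
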